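/- arXiv:2505.21484 — 3 statements merged into one kernel-verified Lean document; each statement's English description precedes it below -/
import Mathlib

section
/- There exists a mean μ on 𝒫_fin(ℕ) such that the pushforward of μ under σ_i equals μ for every i ≥ 1; that is, μ(f ∘ σ_i) = μ(f) for every f ∈ ℓ^∞(𝒫_fin(ℕ)) and every i ∈ ℕ. -/
/-!
A finite set `F ⊆ {1, 2, …}` is determined by the gaps `g₁, g₂, …` between its consecutive holes,
a sequence of positive integers that is eventually `1`. Filling the `i`-th hole replaces
`gᵢ, gᵢ₊₁` by the single gap `gᵢ + gᵢ₊₁`.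

Let `L` be a shift-invariant mean on `ℕ` (`exists_shift_mean`). It is idempotent for convolution:
`L_x (L_y (h (x + y))) = L_x (L h) = L h`. Hence if `μ_n` is the iterated mean in which the first
`n` gaps are drawn successively from `L` and all later gaps are `1`, merging two neighbouring gaps
among the first `n` turns `μ_n` into `μ_{n-1}`; that is, `σ_i μ_n = μ_{n-1}` as soon as `i < n`
(`gapMean_sigma`). Averaging `μ_n` over `n` with `L` again absorbs the shift in `n` and
yields a mean invariant under every `σ_i`.
-/

/-- `f` is a bounded real-valued function, i.e. an element of `ℓ^∞`. -/
def Bdd {X : Type*} (f : X → ℝ) : Prop := ∃ C : ℝ, ∀ x, |f x| ≤ C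

/-- A mean on a set `X`: a positive normalized linear functional on `ℓ^∞(X)`
(we represent it as a functional on all functions, constrained only on bounded ones). -/
def IsMean {X : Type*} (ν : (X → ℝ) → ℝ) : Prop :=
  (∀ f g : X → ℝ, Bdd f → Bdd g → ν (f + g) = ν f + ν g) ∧
  (∀ (c : ℝ) (f : X → ℝ), Bdd f → ν (c • f) = c * ν f) ∧
  (∀ f : X → ℝ, Bdd f → (∀ x, 0 ≤ f x) → 0 ≤ ν f) ∧
  ν (fun _ => 1) = 1


/-- `σ_i` adjoins to `F` the `i`-th smallest element of `ℕ+ \ F` ("fills the i-th hole"). -/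
noncomputable def sigma (i : ℕ) (F : Finset ℕ+) : Finset ℕ+ :=
  insert (Nat.nth (fun n => 0 < n ∧ ∀ x ∈ F, (x : ℕ) ≠ n) (i - 1)).toPNat' F

open Filter Topology

/-! ### Bounded functions and means -/

lemma Bdd.add {X : Type*} {f g : X → ℝ} (hf : Bdd f) (hg : Bdd g) : Bdd (f + g) := by
  obtain ⟨C, hC⟩ := hf
  obtain ⟨D, hD⟩ := hg
  exact ⟨C + D, fun x => (abs_add_le _ _).trans (add_le_add (hC x) (hD x))⟩

lemma Bdd.smul {X : Type*} {f : X → ℝ} (c : ℝ) (hf : Bdd f) : Bdd (c • f) := by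
  obtain ⟨C, hC⟩ := hf
  refine ⟨|c| * C, fun x => ?_⟩
  simp only [Pi.smul_apply, smul_eq_mul, abs_mul]
  exact mul_le_mul_of_nonneg_left (hC x) (abs_nonneg c)

lemma Bdd.comp {X Y : Type*} {f : X → ℝ} (hf : Bdd f) (u : Y → X) : Bdd (fun y => f (u y)) := by
  obtain ⟨C, hC⟩ := hf
  exact ⟨C, fun y => hC _⟩

lemma bdd_one {X : Type*} : Bdd (fun _ : X => (1 : ℝ)) := ⟨1, fun _ => by simp⟩

lemma IsMean.const {X : Type*} {ν : (X → ℝ) → ℝ} (h : IsMean ν) (c : ℝ) :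
    ν (fun _ => c) = c := by
  have := h.2.1 c (fun _ => 1) bdd_one
  rw [h.2.2.2, mul_one] at this
  exact (congrArg ν (funext fun x => by simp)).trans this

lemma IsMean.mono {X : Type*} {ν : (X → ℝ) → ℝ} (h : IsMean ν) {f g : X → ℝ}
    (hf : Bdd f) (hg : Bdd g) (hfg : ∀ x, f x ≤ g x) : ν f ≤ ν g := by
  have hd : Bdd ((-1 : ℝ) • f) := hf.smul _
  have h1 := h.2.2.1 (g + (-1 : ℝ) • f) (hg.add hd) (fun x => by simp; linarith [hfg x])
  rw [h.1 _ _ hg hd, h.2.1 _ _ hf] at h1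
  linarith

lemma IsMean.abs_le {X : Type*} {ν : (X → ℝ) → ℝ} (h : IsMean ν) {f : X → ℝ} {C : ℝ}
    (hC : ∀ x, |f x| ≤ C) : |ν f| ≤ C := by
  have hf : Bdd f := ⟨C, hC⟩
  rw [_root_.abs_le]
  constructor
  · have := h.mono (f := fun _ => -C) (g := f) ⟨|C|, fun _ => by simp⟩ hf
      (fun x => (_root_.abs_le.mp (hC x)).1)
    rwa [h.const] at this
  · have := h.mono (f := f) (g := fun _ => C) hf ⟨|C|, fun _ => le_rfl⟩
      (fun x => (_root_.abs_le.mp (hC x)).2)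
    rwa [h.const] at this

/-- Averaging a family of means with a mean gives a mean. -/
lemma IsMean.bind {X Y : Type*} {L : (Y → ℝ) → ℝ} (hL : IsMean L) {ν : Y → (X → ℝ) → ℝ}
    (hν : ∀ y, IsMean (ν y)) : IsMean (fun f => L (fun y => ν y f)) := by
  have hb : ∀ f : X → ℝ, Bdd f → Bdd (fun y => ν y f) :=
    fun f ⟨C, hC⟩ => ⟨C, fun y => (hν y).abs_le hC⟩
  refine ⟨fun f g hf hg => ?_, fun c f hf => ?_, fun f hf h0 => ?_, ?_⟩
  · exact (congrArg L (funext fun y => (hν y).1 f g hf hg)).trans (hL.1 _ _ (hb f hf) (hb g hg))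
  · exact (congrArg L (funext fun y => (hν y).2.1 c f hf)).trans (hL.2.1 c _ (hb f hf))
  · exact hL.2.2.1 _ (hb f hf) fun y => (hν y).2.2.1 f hf h0
  · exact (congrArg L (funext fun y => (hν y).2.2.2)).trans hL.2.2.2

/-! ### A shift-invariant mean on `ℕ` -/

/-- The mean of `f` over `{0, …, N}`. -/
noncomputable def cesaro (f : ℕ → ℝ) (N : ℕ) : ℝ := (∑ i ∈ Finset.range (N + 1), f i) / (N + 1)

lemma cesaro_isMean (N : ℕ) : IsMean (fun f => cesaro f N) := by
  have hN : (0 : ℝ) < N + 1 := by positivity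
  refine ⟨fun f g _ _ => ?_, fun c f _ => ?_, fun f _ hf => ?_, ?_⟩
  · simp [cesaro, Finset.sum_add_distrib, add_div]
  · simp [cesaro, ← Finset.mul_sum, mul_div_assoc]
  · exact div_nonneg (Finset.sum_nonneg fun i _ => hf i) hN.le
  · simp [cesaro, hN.ne']

lemma tendsto_cesaro {f : ℕ → ℝ} (hf : Bdd f) :
    ∃ l, Tendsto (cesaro f) (hyperfilter ℕ : Filter ℕ) (𝓝 l) := by
  obtain ⟨C, hC⟩ := hf
  have hK : IsCompact (Set.Icc (-C) C) := isCompact_Icc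
  obtain ⟨l, -, hl⟩ := hK.ultrafilter_le_nhds ((hyperfilter ℕ).map (cesaro f)) (by
    rw [le_principal_iff, Ultrafilter.mem_coe, Ultrafilter.mem_map]
    refine Filter.univ_mem' fun N => ?_
    exact _root_.abs_le.mp ((cesaro_isMean N).abs_le hC))
  exact ⟨l, hl⟩

/-- A Banach limit: the limit of Cesàro means along a nonprincipal ultrafilter. -/
lemma exists_shift_mean : ∃ L : (ℕ → ℝ) → ℝ, IsMean L ∧
    ∀ f, Bdd f → L (fun n => f (n + 1)) = L f := by
  let L : (ℕ → ℝ) → ℝ := fun f => limUnder (hyperfilter ℕ : Filter ℕ) (cesaro f)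
  have hL : ∀ f, Bdd f → Tendsto (cesaro f) (hyperfilter ℕ : Filter ℕ) (𝓝 (L f)) :=
    fun f hf => tendsto_nhds_limUnder (tendsto_cesaro hf)
  refine ⟨L, ⟨fun f g hf hg => ?_, fun c f hf => ?_, fun f hf h0 => ?_, ?_⟩, fun f hf => ?_⟩
  · refine tendsto_nhds_unique (hL _ (hf.add hg)) (((hL f hf).add (hL g hg)).congr fun N => ?_)
    exact ((cesaro_isMean N).1 f g hf hg).symm
  · refine tendsto_nhds_unique (hL _ (hf.smul c)) (((hL f hf).const_mul c).congr fun N => ?_)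
    exact ((cesaro_isMean N).2.1 c f hf).symm
  · exact ge_of_tendsto' (hL f hf) fun N => (cesaro_isMean N).2.2.1 f hf h0
  · refine tendsto_nhds_unique (hL _ bdd_one) (tendsto_const_nhds.congr fun N => ?_)
    exact ((cesaro_isMean N).2.2.2).symm
  · have hs := hL _ (hf.comp (fun n => n + 1))
    obtain ⟨C, hC⟩ := id hf
    have hz : Tendsto (fun N : ℕ => 2 * C * (1 / ((N : ℝ) + 1))) atTop (𝓝 0) := by
      simpa using (tendsto_one_div_add_atTop_nhds_zero_nat (𝕜 := ℝ)).const_mul (2 * C)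
    have hd : Tendsto (fun N => cesaro (fun n => f (n + 1)) N - cesaro f N) atTop (𝓝 0) := by
      refine squeeze_zero_norm (fun N => ?_) hz
      have hN : (0 : ℝ) < N + 1 := by positivity
      -- the two sums telescope, up to the boundary terms
      have : cesaro (fun n => f (n + 1)) N - cesaro f N = (f (N + 1) - f 0) / (N + 1) := by
        rw [cesaro, cesaro, ← sub_div, Finset.sum_range_succ, Finset.sum_range_succ' f]
        ring
      rw [this, Real.norm_eq_abs, abs_div, abs_of_pos hN, div_eq_mul_one_div]
      refine mul_le_mul_of_nonneg_right ?_ (by positivity)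
      calc |f (N + 1) - f 0| ≤ |f (N + 1)| + |f 0| := abs_sub _ _
        _ ≤ 2 * C := by linarith [hC (N + 1), hC 0]
    have hd' := hd.mono_left (Nat.hyperfilter_le_atTop)
    have := tendsto_nhds_unique (hs.sub (hL f hf)) hd'
    linarith

lemma shift_iterate {L : (ℕ → ℝ) → ℝ} (hs : ∀ f, Bdd f → L (fun n => f (n + 1)) = L f)
    (k : ℕ) {f : ℕ → ℝ} (hf : Bdd f) : L (fun n => f (n + k)) = L f := by
  induction k with
  | zero => rfl
  | succ k ih =>
    rw [← ih, ← hs _ (hf.comp (fun n => n + k))]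
    congr 1
    funext n
    congr 1
    omega

/-! ### Random gaps -/

/-- `fill k x F` adjoins `k + 1, …, k + x` to `F`. -/
def fill (k x : ℕ) (F : Finset ℕ+) : Finset ℕ+ :=
  F ∪ (Finset.range x).image (fun t => (k + t).succPNat)

lemma mem_fill {k x : ℕ} {F : Finset ℕ+} {m : ℕ+} :
    m ∈ fill k x F ↔ m ∈ F ∨ (k < (m : ℕ) ∧ (m : ℕ) ≤ k + x) := by
  simp only [fill, Finset.mem_union, Finset.mem_image, Finset.mem_range]
  refine or_congr Iff.rfl ⟨?_, fun h => ⟨(m : ℕ) - k - 1, by omega, ?_⟩⟩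
  · rintro ⟨t, ht, rfl⟩
    simp only [Nat.succPNat_coe]
    omega
  · apply PNat.eq
    simp only [Nat.succPNat_coe]
    omega

/-- For `F ⊆ {1, …, k}`: the iterated mean of `f` over the sets that agree with `F` on
`{1, …, k}` and whose next `n` holes after `k` are at successive distances `x + 1` with `x` drawn
from `L`; every position after the last of these holes is a hole as well. -/
noncomputable def gapMean (L : (ℕ → ℝ) → ℝ) : ℕ → ℕ → Finset ℕ+ → (Finset ℕ+ → ℝ) → ℝ
  | 0, _, F, f => f F
  | n + 1, k, F, f => L (fun x => gapMean L n (k + x + 1) (fill k x F) f)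

lemma gapMean_isMean {L : (ℕ → ℝ) → ℝ} (hL : IsMean L) (n k : ℕ) (F : Finset ℕ+) :
    IsMean (gapMean L n k F) := by
  induction n generalizing k F with
  | zero => exact ⟨fun _ _ _ _ => rfl, fun _ _ _ => rfl, fun _ _ h => h F, rfl⟩
  | succ n ih => exact hL.bind fun x => ih _ _

lemma gapMean_bdd {L : (ℕ → ℝ) → ℝ} (hL : IsMean L) {f : Finset ℕ+ → ℝ} (hf : Bdd f) {Y : Type*}
    (n k : Y → ℕ) (F : Y → Finset ℕ+) : Bdd (fun y => gapMean L (n y) (k y) (F y) f) := by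
  obtain ⟨C, hC⟩ := hf
  exact ⟨C, fun y => (gapMean_isMean hL _ _ _).abs_le hC⟩

/-! ### Counting holes -/

/-- `n` is a hole of `F`: a positive integer outside `F`. -/
def IsHole (F : Finset ℕ+) (n : ℕ) : Prop := 0 < n ∧ ∀ x ∈ F, (x : ℕ) ≠ n

open scoped Classical in
/-- The number of holes of `F` below `n`. -/
noncomputable def holesBelow (F : Finset ℕ+) (n : ℕ) : ℕ := Nat.count (IsHole F) n

lemma sigma_eq {F : Finset ℕ+} {m i : ℕ} (hm : IsHole F m) (hi : holesBelow F m + 1 = i) :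
    sigma i F = insert m.toPNat' F := by
  classical
  have h : Nat.nth (IsHole F) (i - 1) = m := by
    rw [← hi, Nat.add_sub_cancel, holesBelow]
    convert Nat.nth_count hm
  unfold sigma
  rw [← h]
  rfl

lemma isHole_fill {k x m : ℕ} {F : Finset ℕ+} :
    IsHole (fill k x F) m ↔ IsHole F m ∧ ¬ (k < m ∧ m ≤ k + x) := by
  constructor
  · rintro ⟨h0, h⟩
    refine ⟨⟨h0, fun y hy => h y (mem_fill.mpr (Or.inl hy))⟩, fun hk => ?_⟩
    exact h ⟨m, h0⟩ (mem_fill.mpr (Or.inr hk)) rfl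
  · rintro ⟨⟨h0, h⟩, hk⟩
    refine ⟨h0, fun y hy => ?_⟩
    rcases mem_fill.mp hy with hy | hy
    · exact h y hy
    · rintro rfl
      exact hk hy

lemma holesBelow_fill {k x m : ℕ} {F : Finset ℕ+} (hm : m ≤ k + 1) :
    holesBelow (fill k x F) m = holesBelow F m := by
  classical
  simp only [holesBelow, Nat.count_eq_card_filter_range]
  congr 1
  apply Finset.filter_congr
  intro y hy
  have := Finset.mem_range.mp hy
  rw [isHole_fill]
  exact ⟨fun h => h.1, fun h => ⟨h, by omega⟩⟩

lemma holesBelow_succ_of_isHole {F : Finset ℕ+} {n : ℕ} (h : IsHole F n) :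
    holesBelow F (n + 1) = holesBelow F n + 1 := by
  simp [holesBelow, Nat.count_succ, h]

lemma holesBelow_succ_of_not_isHole {F : Finset ℕ+} {n : ℕ} (h : ¬ IsHole F n) :
    holesBelow F (n + 1) = holesBelow F n := by
  simp [holesBelow, Nat.count_succ, h]

lemma holesBelow_fill_end {k x : ℕ} {F : Finset ℕ+} :
    holesBelow (fill k x F) (k + x + 1) = holesBelow F (k + 1) := by
  have hcount : ∀ t ≤ x, holesBelow (fill k x F) (k + t + 1) = holesBelow F (k + 1) := by
    intro t ht
    induction t with
    | zero => exact holesBelow_fill le_rfl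
    | succ t iht =>
      rw [← iht (by omega)]
      refine holesBelow_succ_of_not_isHole fun h => ?_
      exact (isHole_fill.mp h).2 (by omega)
  exact hcount x le_rfl

lemma insert_fill {k x m : ℕ} {F : Finset ℕ+} :
    insert m.toPNat' (fill k x F) = fill k x (insert m.toPNat' F) := by
  simp [fill, Finset.insert_union]

/-! ### Effect of `σ_i` on the iterated means -/

/-- When the `i`-th hole `m` lies in the part already determined, the random gaps after `k` do not
affect its position, so `σ_i` just adjoins `m`. -/
lemma gapMean_sigma_of_hole (L : (ℕ → ℝ) → ℝ) (f : Finset ℕ+ → ℝ) {m i : ℕ} (n k : ℕ)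
    (F : Finset ℕ+) (hmk : m ≤ k) (hm : IsHole F m) (hi : holesBelow F m + 1 = i) :
    gapMean L n k F (fun G => f (sigma i G)) = gapMean L n k (insert m.toPNat' F) f := by
  induction n generalizing k F with
  | zero => simp only [gapMean, sigma_eq hm hi]
  | succ n ih =>
    simp only [gapMean]
    congr 1
    funext x
    rw [ih _ _ (by omega) (isHole_fill.mpr ⟨hm, by omega⟩)
      (by rw [holesBelow_fill (by omega), hi]), insert_fill]

/-- Filling two consecutive gaps together with the hole between them is filling one gap. -/
lemma fill_merge {k x y : ℕ} {F : Finset ℕ+} :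
    fill (k + x + 1) y (insert (k + x + 1).toPNat' (fill k x F)) = fill k (y + (x + 1)) F := by
  ext m
  have h : m = (k + x + 1).toPNat' ↔ (m : ℕ) = k + x + 1 := by
    rw [← PNat.coe_inj, Nat.toPNat'_coe]
    simp
  rw [mem_fill, Finset.mem_insert, mem_fill, mem_fill, h]
  have : k + (y + (x + 1)) = k + x + 1 + y := by omega
  rw [this]
  by_cases hF : m ∈ F
  · simp [hF]
  · simp only [hF, false_or]
    omega

/-- If the `i`-th hole ends one of the first `n` of `n + 1` random gaps, filling it merges that gap
with the next one; since `L` is idempotent under addition, this just lowers the number of random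
gaps by one. -/
lemma gapMean_sigma {L : (ℕ → ℝ) → ℝ} (hL : IsMean L)
    (hs : ∀ f, Bdd f → L (fun n => f (n + 1)) = L f) {f : Finset ℕ+ → ℝ} (hf : Bdd f) {i : ℕ}
    (n k : ℕ) (F : Finset ℕ+) (hF : ∀ x ∈ F, (x : ℕ) ≤ k)
    (h1 : holesBelow F (k + 1) < i) (h2 : i ≤ n + holesBelow F (k + 1)) :
    gapMean L (n + 1) k F (fun G => f (sigma i G)) = gapMean L n k F f := by
  induction n generalizing k F with
  | zero => omega
  | succ n ih =>
    have hhole : ∀ x, IsHole (fill k x F) (k + x + 1) := fun x => by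
      refine isHole_fill.mpr ⟨⟨by omega, fun y hy => ?_⟩, by omega⟩
      have := hF y hy
      omega
    by_cases hi : holesBelow F (k + 1) + 1 = i
    · let h : ℕ → ℝ := fun z => gapMean L n (k + z + 1) (fill k z F) f
      have hh : Bdd h := gapMean_bdd hL hf _ _ _
      change L (fun x => gapMean L (n + 1) (k + x + 1) (fill k x F) _) = L h
      -- the inner mean over the second gap does not depend on the first gap
      have : ∀ x, gapMean L (n + 1) (k + x + 1) (fill k x F) (fun G => f (sigma i G)) = L h := by
        intro x
        rw [gapMean_sigma_of_hole L f _ _ _ le_rfl (hhole x) (by rw [holesBelow_fill_end, hi]),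
          ← shift_iterate hs (x + 1) hh]
        simp only [gapMean, h]
        congr 1
        funext y
        rw [fill_merge]
        congr 1
        omega
      simp only [this]
      exact hL.const _
    · have hb : ∀ x, holesBelow (fill k x F) (k + x + 1 + 1) = holesBelow F (k + 1) + 1 := by
        intro x
        rw [holesBelow_succ_of_isHole (hhole x), holesBelow_fill_end]
      change L (fun x => gapMean L (n + 1) (k + x + 1) (fill k x F) _) =
        L (fun x => gapMean L n (k + x + 1) (fill k x F) f)
      congr 1
      funext x
      refine ih _ _ (fun y hy => ?_) (by rw [hb]; omega) (by rw [hb]; omega)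
      rcases mem_fill.mp hy with hy | hy
      · have := hF y hy
        omega
      · omega

/-- There is a mean `μ` on the finite subsets of `ℕ = {1,2,…}` with `σ_i μ = μ`
for every `i ≥ 1`. -/
theorem stmt_8 :
    ∃ μ : (Finset ℕ+ → ℝ) → ℝ, IsMean μ ∧
      ∀ i : ℕ, 1 ≤ i → ∀ f : Finset ℕ+ → ℝ, Bdd f →
        μ (fun F => f (sigma i F)) = μ f := by
  obtain ⟨L, hL, hs⟩ := exists_shift_mean
  refine ⟨fun f => L (fun n => gapMean L n 0 ∅ f), hL.bind fun n => gapMean_isMean hL n 0 ∅,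
    fun i hi f hf => ?_⟩
  have h0 : holesBelow ∅ (0 + 1) = 0 := by
    classical
    simp [holesBelow, Nat.count_succ, IsHole]
  beta_reduce
  rw [← shift_iterate hs (i + 1) (gapMean_bdd hL (hf.comp (sigma i)) (fun n => n) _ _),
    ← shift_iterate hs i (gapMean_bdd hL hf (fun n => n) _ _)]
  congr 1
  funext n
  exact gapMean_sigma hL hs hf (n + i) 0 ∅ (by simp) (by omega) (by omega)
end

section
/- The monoid S is right cancellative: for all s, t, x ∈ S, if s·x = t·x then s = t. -/
/-!
`S` is the opposite of a monoid of injective maps. Let `skip i : ℕ+ → ℕ+` be the strictly increasing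
map whose range misses exactly `i`. These maps satisfy the cosimplicial identity
`skip i ∘ skip j = skip (j + 1) ∘ skip i` for `i ≤ j`, so `s i ↦ skip i` extends to a homomorphism
`skipHom` from `S` to the opposite of the monoid of self-maps of `ℕ+`.

This homomorphism is injective. Rewriting `s j * s i` to `s i * s (j + 1)` whenever `i ≤ j` shows
that every element of `S` is a product `s i₁ * ⋯ * s iₖ` with `i₁ < ⋯ < iₖ` (`exists_normal`), and
the range of the image of such a product is the complement of `{i₁, …, iₖ}`
(`mem_range_act_normal`), from which the product is recovered.

Right multiplication by `x` becomes composition on the left with an injective map, which can be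
cancelled.
-/

/-- The defining relations of the facial monoid `S`:
`s_j s_i = s_i s_{j+1}` for all `1 ≤ i ≤ j` (indices in `ℕ = {1,2,…}`, modelled by `ℕ+`). -/
def faceRel : FreeMonoid ℕ+ → FreeMonoid ℕ+ → Prop := fun a b =>
  ∃ i j : ℕ+, i ≤ j ∧ a = FreeMonoid.of j * FreeMonoid.of i ∧
    b = FreeMonoid.of i * FreeMonoid.of (j + 1)

/-- The facial monoid `S = ⟨ s_i : s_j s_i = s_i s_{j+1} ∀ 1 ≤ i ≤ j ⟩`. -/
abbrev S : Type := (conGen faceRel).Quotient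

/-- The generator `s_i` of `S`. -/
def s (i : ℕ+) : S := Con.mk' (conGen faceRel) (FreeMonoid.of i)

/-- The strictly increasing self-map of `ℕ+` whose range is the complement of `{i}`. -/
def skip (i n : ℕ+) : ℕ+ := if n < i then n else n + 1

lemma skip_injective (i : ℕ+) : Function.Injective (skip i) := by
  intro a b h
  unfold skip at h
  split_ifs at h <;> simp only [← PNat.coe_lt_coe, ← PNat.coe_inj, PNat.add_coe, PNat.one_coe] at * <;>
    omega

lemma skip_comp_skip {i j : ℕ+} (h : i ≤ j) (n : ℕ+) :
    skip i (skip j n) = skip (j + 1) (skip i n) := by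
  unfold skip
  split_ifs <;>
    simp only [← PNat.coe_lt_coe, ← PNat.coe_le_coe, ← PNat.coe_inj, PNat.add_coe,
      PNat.one_coe] at * <;>
    omega

lemma exists_skip_eq_iff (i m : ℕ+) : (∃ n, skip i n = m) ↔ m ≠ i := by
  constructor
  · rintro ⟨n, rfl⟩ h
    unfold skip at h
    split_ifs at h <;>
      simp only [← PNat.coe_lt_coe, ← PNat.coe_inj, PNat.add_coe, PNat.one_coe] at * <;> omega
  · intro h
    rcases lt_or_gt_of_ne h with h | h
    · exact ⟨m, if_pos h⟩
    · obtain ⟨k, rfl⟩ := PNat.exists_eq_succ_of_ne_one (ne_of_gt (lt_of_le_of_lt (one_le : 1 ≤ i) h))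
      exact ⟨k, if_neg (not_lt.2 (PNat.lt_add_one_iff.1 h))⟩

/-- The homomorphism `s i ↦ skip i` from `S` to the opposite of the monoid of self-maps of `ℕ+`;
the opposite is needed because the defining relations hold for `skip` in reverse order. -/
def skipHom : S →* (Function.End ℕ+)ᵐᵒᵖ :=
  Con.lift (conGen faceRel) (FreeMonoid.lift fun i => MulOpposite.op (skip i : Function.End ℕ+))
    (Con.conGen_le.2 (by
      rintro _ _ ⟨i, j, h, rfl, rfl⟩
      rw [Con.ker_rel]
      simp only [map_mul, FreeMonoid.lift_eval_of]
      refine congrArg MulOpposite.op (funext fun n => ?_)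
      exact skip_comp_skip h n))

/-- `skipHom a` as a plain function. -/
def act (a : S) : ℕ+ → ℕ+ := (skipHom a).unop

lemma act_one (n : ℕ+) : act 1 n = n := by
  unfold act
  rw [map_one]
  rfl

lemma act_mul (a b : S) (n : ℕ+) : act (a * b) n = act b (act a n) := by
  unfold act
  rw [map_mul]
  rfl

lemma act_s (i : ℕ+) : act (s i) = skip i := by
  have h : skipHom (s i) = MulOpposite.op (skip i : Function.End ℕ+) := FreeMonoid.lift_eval_of _ _
  unfold act
  rw [h]
  rfl

lemma s_mul_s {i j : ℕ+} (h : i ≤ j) : s j * s i = s i * s (j + 1) :=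
  (Con.eq _).2 (ConGen.Rel.of _ _ ⟨i, j, h, rfl, rfl⟩)

lemma S_induction {p : S → Prop} (one : p 1) (mul : ∀ i a, p a → p (s i * a)) (a : S) : p a := by
  obtain ⟨w, rfl⟩ := Con.mk'_surjective a
  induction w using FreeMonoid.inductionOn' with
  | one => simpa using one
  | of_mul i w ih =>
    rw [map_mul]
    exact mul i _ ih

/-- Insertion of a generator into an increasing product. The lower bound `m` is what makes the
induction go through: it keeps the head of the list below the rewritten tail. -/
lemma exists_insert (l : List ℕ+) (hl : l.Pairwise (· < ·)) (i : ℕ+) :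
    ∃ l' : List ℕ+, l'.Pairwise (· < ·) ∧ s i * (l.map s).prod = (l'.map s).prod ∧
      ∀ m, m < i → (∀ k ∈ l, m < k) → ∀ k ∈ l', m < k := by
  induction l generalizing i with
  | nil => exact ⟨[i], by simp, by simp, by simp⟩
  | cons j t ih =>
    rw [List.pairwise_cons] at hl
    rcases lt_or_ge i j with h | h
    · refine ⟨i :: j :: t, ?_, by simp, ?_⟩
      · simp only [List.pairwise_cons, List.mem_cons]
        refine ⟨?_, hl⟩
        rintro k (rfl | hk)
        · exact h
        · exact h.trans (hl.1 k hk)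
      · intro m hm hk k hk'
        rcases List.mem_cons.1 hk' with rfl | hk'
        · exact hm
        · exact hk k hk'
    · obtain ⟨l', h1, h2, h3⟩ := ih hl.2 (i + 1)
      refine ⟨j :: l', ?_, ?_, ?_⟩
      · exact List.pairwise_cons.2 ⟨h3 j (PNat.lt_add_one_iff.2 h) hl.1, h1⟩
      · rw [List.map_cons, List.prod_cons, List.map_cons, List.prod_cons, ← mul_assoc, s_mul_s h,
          mul_assoc, h2]
      · intro m hm hk k hk'
        rcases List.mem_cons.1 hk' with rfl | hk'
        · exact hk _ List.mem_cons_self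
        · exact h3 m (hm.trans (PNat.lt_add_right i 1))
            (fun k hk'' => hk k (List.mem_cons_of_mem _ hk'')) k hk'

lemma exists_normal (a : S) :
    ∃ l : List ℕ+, l.Pairwise (· < ·) ∧ a = (l.map s).prod := by
  induction a using S_induction with
  | one => exact ⟨[], by simp, by simp⟩
  | mul i a ih =>
    obtain ⟨l, hl, rfl⟩ := ih
    obtain ⟨l', h1, h2, -⟩ := exists_insert l hl i
    exact ⟨l', h1, h2⟩

lemma act_injective (a : S) : Function.Injective (act a) := by
  induction a using S_induction with
  | one =>
    intro x y h
    simpa only [act_one] using h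
  | mul i a ih =>
    intro x y h
    rw [act_mul, act_mul, act_s] at h
    exact skip_injective i (ih h)

lemma act_prod_of_lt (l : List ℕ+) (hl : l.Pairwise (· < ·)) (n : ℕ+) (h : ∀ k ∈ l, n < k) :
    act (l.map s).prod n = n := by
  induction l with
  | nil => exact act_one n
  | cons j t ih =>
    rw [List.pairwise_cons] at hl
    have hn : skip j n = n := if_pos (h j List.mem_cons_self)
    rw [List.map_cons, List.prod_cons, act_mul, act_s, hn]
    exact ih hl.2 fun k hk => h k (List.mem_cons_of_mem _ hk)

lemma mem_range_act_normal (l : List ℕ+) (hl : l.Pairwise (· < ·)) (m : ℕ+) :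
    m ∈ Set.range (act (l.map s).prod) ↔ m ∉ l := by
  induction l with
  | nil => simpa using ⟨m, act_one m⟩
  | cons j t ih =>
    rw [List.pairwise_cons] at hl
    -- The later factors fix `j`, so the value removed from the range by `skip j` is `j` itself.
    have hj := act_prod_of_lt t hl.2 j hl.1
    rw [List.mem_cons, not_or, ← ih hl.2, List.map_cons, List.prod_cons]
    constructor
    · rintro ⟨n, rfl⟩
      rw [act_mul, act_s]
      refine ⟨fun h => ?_, _, rfl⟩
      exact (exists_skip_eq_iff j _).1 ⟨n, rfl⟩ (act_injective _ (h.trans hj.symm))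
    · rintro ⟨hm, n, rfl⟩
      obtain ⟨k, rfl⟩ := (exists_skip_eq_iff j n).2 (fun h => hm (by rw [h, hj]))
      exact ⟨k, by rw [act_mul, act_s]⟩

lemma eq_of_act_eq {a b : S} (h : act a = act b) : a = b := by
  obtain ⟨l, hl, rfl⟩ := exists_normal a
  obtain ⟨l', hr, rfl⟩ := exists_normal b
  have hmem : ∀ m, m ∈ l ↔ m ∈ l' := fun m => by
    rw [← not_iff_not, ← mem_range_act_normal l hl, ← mem_range_act_normal l' hr, h]
  have hp : l.Perm l' :=
    (List.perm_ext_iff_of_nodup (hl.imp fun h => ne_of_lt h) (hr.imp fun h => ne_of_lt h)).2 hmem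
  rw [hp.eq_of_pairwise (fun a b _ _ h h' => absurd h' (lt_asymm h)) hl hr]

/-- The facial monoid `S` is right cancellative. -/
theorem stmt_10 : ∀ a b x : S, a * x = b * x → a = b := by
  intro a b x h
  refine eq_of_act_eq (funext fun n => act_injective x ?_)
  rw [← act_mul, ← act_mul, h]
end

section
/- For every nonempty finite subset A ⊆ S, either |A ∖ s_1·A| ≥ |A|/5 or |A ∖ s_2·A| ≥ |A|/5, where s_i·A = {s_i·a : a ∈ A}. -/
noncomputable instance : DecidableEq S := Classical.decEq _

/-- The coface map on `ℕ+`: the increasing injection whose range is the complement of `{i}`. -/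
def coface (i k : ℕ+) : ℕ+ := if k < i then k else k + 1

lemma coface_injective (i : ℕ+) : Function.Injective (coface i) := by
  intro a b h
  unfold coface at h
  rw [← PNat.coe_inj] at h ⊢
  split_ifs at h with h1 h2 h2 <;> simp only [← PNat.coe_lt_coe, PNat.add_coe, PNat.one_coe] at * <;>
    omega

lemma coface_comp (i j : ℕ+) (h : i ≤ j) (k : ℕ+) :
    coface i (coface j k) = coface (j + 1) (coface i k) := by
  unfold coface
  rw [← PNat.coe_inj]
  rw [← PNat.coe_le_coe] at h
  split_ifs <;> simp only [← PNat.coe_lt_coe, PNat.add_coe, PNat.one_coe] at * <;> omega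

/-- The right action of `S` on `ℕ+` by coface maps. The opposite monoid appears because
`s j * s i` acts as `coface i ∘ coface j`. -/
def cofaceHom : S →* (Function.End ℕ+)ᵐᵒᵖ :=
  (conGen faceRel).lift
    (FreeMonoid.lift fun i => MulOpposite.op (coface i : Function.End ℕ+)) (by
      rw [Con.conGen_le]
      rintro _ _ ⟨i, j, hij, rfl, rfl⟩
      rw [Con.ker_rel, map_mul, map_mul]
      simp only [FreeMonoid.lift_eval_of]
      exact congrArg MulOpposite.op (funext (coface_comp i j hij)))

lemma cofaceHom_s (i : ℕ+) : cofaceHom (s i) = MulOpposite.op (coface i : Function.End ℕ+) := rfl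

lemma cofaceHom_injective (a : S) :
    Function.Injective ((cofaceHom a).unop : ℕ+ → ℕ+) := by
  induction a using Con.induction_on with
  | H w =>
    induction w using FreeMonoid.inductionOn' with
    | one => exact Function.injective_id
    | of_mul i w ih =>
      have h : cofaceHom ((FreeMonoid.of i * w : FreeMonoid ℕ+) : S) =
          cofaceHom (s i) * cofaceHom (w : S) := map_mul cofaceHom (s i) (w : S)
      rw [h]
      exact ih.comp (coface_injective i)

lemma s_one_mul_ne (a : S) : s 1 * a ≠ s 2 * a := by
  intro h
  have h' := congrArg (fun x => (cofaceHom x).unop (1 : ℕ+)) h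
  simp only [map_mul, cofaceHom_s] at h'
  have h2 : coface 1 1 = coface 2 1 := cofaceHom_injective a h'
  exact absurd h2 (by decide)

lemma s_one_mul_s_one : s 1 * s 1 = s 1 * s 2 :=
  (Con.eq _).2 (ConGen.Rel.of _ _ ⟨1, 1, le_rfl, rfl, rfl⟩)

/-- The counting argument, for any two maps that are nowhere equal and become equal after composing
with `f`. -/
lemma card_le_of_collapse {α : Type*} [DecidableEq α] (f g : α → α)
    (hfg : ∀ a, f (f a) = f (g a)) (hne : ∀ a, f a ≠ g a) (A : Finset α) :
    A.card ≤ 4 * (A \ A.image f).card + (A \ A.image g).card := by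
  have key : ∀ h : α → α,
      A.card ≤ (A.filter fun a => h a ∈ A).card + (A \ A.image h).card := by
    intro h
    have h1 : A ∩ A.image h ⊆ (A.filter fun a => h a ∈ A).image h := by
      intro x hx
      simp only [Finset.mem_inter, Finset.mem_image, Finset.mem_filter] at hx ⊢
      obtain ⟨hx, a, ha, rfl⟩ := hx
      exact ⟨a, ⟨ha, hx⟩, rfl⟩
    have h2 := (Finset.card_le_card h1).trans Finset.card_image_le
    have h3 := Finset.card_sdiff_add_card_inter A (A.image h)
    omega
  have hf := key f
  have hg := key g
  set F := A.filter fun a => f a ∈ A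
  set F' := A.filter fun a => g a ∈ A
  have hGcard := Finset.card_union_add_card_inter F F'
  have hFA : F ∪ F' ⊆ A := Finset.union_subset (Finset.filter_subset _ _) (Finset.filter_subset _ _)
  set G := F ∩ F'
  have hFA' := Finset.card_le_card hFA
  have hGA : G ⊆ A := Finset.inter_subset_left.trans (Finset.filter_subset _ _)
  have hGf : ∀ a ∈ G, f a ∈ A := fun a ha =>
    (Finset.mem_filter.1 (Finset.mem_inter.1 ha).1).2
  have hGg : ∀ a ∈ G, g a ∈ A := fun a ha =>
    (Finset.mem_filter.1 (Finset.mem_inter.1 ha).2).2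
  have himg : A.card ≤ (A.image f).card + (A \ A.image f).card := by
    have h1 := Finset.card_sdiff_add_card_inter A (A.image f)
    have h2 := Finset.card_le_card (Finset.inter_subset_right (s₁ := A) (s₂ := A.image f))
    omega
  have split : ∀ B ⊆ A, (A.image f).card + B.card ≤ (B.image f).card + A.card := by
    intro B hB
    have h1 : A.image f = (B.image f) ∪ ((A \ B).image f) := by
      rw [← Finset.image_union, Finset.union_sdiff_of_subset hB]
    have h2 := Finset.card_union_le (B.image f) ((A \ B).image f)
    have h3 := Finset.card_image_le (s := A \ B) (f := f)
    have h4 := Finset.card_sdiff_add_card_eq_card hB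
    rw [h1]
    omega
  set V := G.image f ∪ G.image g with hV
  have hVA : V ⊆ A := by
    refine Finset.union_subset ?_ ?_ <;> rw [Finset.image_subset_iff]
    exacts [hGf, hGg]
  have hVG : (G.image f).card ≤ V.card := Finset.card_le_card Finset.subset_union_left
  have hfib : (V.image f).card * 2 ≤ V.card := by
    rw [mul_comm]
    refine Finset.mul_card_image_le_card (f := f) V 2 fun y hy => ?_
    have hpair : ∃ a ∈ G, f (f a) = y := by
      simp only [hV, Finset.mem_image, Finset.mem_union] at hy
      obtain ⟨x, ⟨a, ha, rfl⟩ | ⟨a, ha, rfl⟩, rfl⟩ := hy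
      exacts [⟨a, ha, rfl⟩, ⟨a, ha, hfg a⟩]
    obtain ⟨a, ha, hay⟩ := hpair
    rw [← Finset.card_pair (hne a)]
    refine Finset.card_le_card ?_
    intro x hx
    simp only [Finset.mem_insert, Finset.mem_singleton] at hx
    rw [Finset.mem_filter]
    obtain rfl | rfl := hx
    · exact ⟨Finset.mem_union_left _ (Finset.mem_image_of_mem _ ha), hay⟩
    · exact ⟨Finset.mem_union_right _ (Finset.mem_image_of_mem _ ha), (hfg a).symm.trans hay⟩
  have hsG := split G hGA
  have hsV := split V hVA
  omega

/-- For every nonempty finite `A ⊆ S`, either `|A \ s₁·A| ≥ |A|/5` or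
`|A \ s₂·A| ≥ |A|/5`. -/
theorem stmt_13 (A : Finset S) (hA : A.Nonempty) :
    (A.card : ℝ) / 5 ≤ ((A \ A.image (fun a => s 1 * a)).card : ℝ) ∨
    (A.card : ℝ) / 5 ≤ ((A \ A.image (fun a => s 2 * a)).card : ℝ) := by
  have h := card_le_of_collapse (fun a => s 1 * a) (fun a => s 2 * a)
    (fun a => by simp only [← mul_assoc, s_one_mul_s_one]) s_one_mul_ne A
  have h' : (A.card : ℝ) ≤ 4 * ((A \ A.image (fun a => s 1 * a)).card : ℝ) +
      ((A \ A.image (fun a => s 2 * a)).card : ℝ) := by exact_mod_cast h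
  by_contra! hc
  linarith [hc.1, hc.2]
end
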